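/- arXiv:1506.08970 — 3 statements merged into one kernel-verified Lean document; each statement's English description precedes it below -/
import Mathlib

section
/- A finite simple graph G is chordal if and only if there exists a perfect elimination ordering of its vertex set. -/
/-- A finite simple graph is *chordal* if every cycle of length at least 4 has a chord,
i.e. an edge of the graph joining two vertices of the cycle that are not consecutive in
the cycle. -/
def SimpleGraph.IsChordal {V : Type*} (G : SimpleGraph V) : Prop :=
  ∀ ⦃v : V⦄ (c : G.Walk v v), c.IsCycle → 4 ≤ c.length →
    ∃ x y : V, x ∈ c.support ∧ y ∈ c.support ∧ G.Adj x y ∧ s(x, y) ∉ c.edges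

/-- An ordering of the vertices (given by an equivalence with `Fin (card V)`) is a
*perfect elimination ordering* if for each vertex `v`, the set of neighbors of `v`
that come later in the ordering forms a clique. -/
def SimpleGraph.IsPerfectElimOrdering {V : Type*} [Fintype V] (G : SimpleGraph V)
    (e : V ≃ Fin (Fintype.card V)) : Prop :=
  ∀ v : V, G.IsClique {u : V | G.Adj v u ∧ e v < e u}

/-- The graph `G` with only the edges inside `T` kept. -/
def chordalRestr {V : Type*} (G : SimpleGraph V) (T : Set V) : SimpleGraph V where
  Adj a b := G.Adj a b ∧ a ∈ T ∧ b ∈ T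
  symm := ⟨fun _ _ h => ⟨h.1.symm, h.2.2, h.2.1⟩⟩
  loopless := ⟨fun _ h => G.loopless.irrefl _ h.1⟩

theorem chordalRestr_le {V : Type*} (G : SimpleGraph V) (T : Set V) : chordalRestr G T ≤ G :=
  fun _ _ h => h.1

theorem chordalRestr_mono {V : Type*} (G : SimpleGraph V) {S T : Set V} (h : S ⊆ T) :
    chordalRestr G S ≤ chordalRestr G T :=
  fun _ _ hh => ⟨hh.1, h hh.2.1, h hh.2.2⟩

theorem chordalRestr_walk_mem {V : Type*} (G : SimpleGraph V) (T : Set V) {a b : V}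
    (p : (chordalRestr G T).Walk a b) (ha : a ∈ T) : ∀ x ∈ p.support, x ∈ T := by
  induction p with
  | nil => simpa using ha
  | cons h p ih =>
    intro x hx
    rw [SimpleGraph.Walk.support_cons, List.mem_cons] at hx
    rcases hx with rfl | hx
    · exact ha
    · exact ih h.2.2 x hx

/-- Shortest walks are chordless. -/
theorem chordless_of_shortest {V : Type*} {H : SimpleGraph V} {x y : V} (p : H.Walk x y)
    (hp : p.length = H.dist x y) {i j : ℕ} (hij : i < j) (hj : j ≤ p.length)
    (h : H.Adj (p.getVert i) (p.getVert j)) : j = i + 1 := by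
  have := SimpleGraph.dist_le ((p.take i).append (SimpleGraph.Walk.cons h (p.drop j)))
  simp only [SimpleGraph.Walk.length_append, SimpleGraph.Walk.length_cons,
    SimpleGraph.Walk.take_length, SimpleGraph.Walk.drop_length] at this
  omega

/-- Two neighbours of `v` joined through non-neighbours of `v` are adjacent. -/
theorem adj_of_reachable_avoiding {V : Type*} {G : SimpleGraph V} (hG : G.IsChordal)
    {v x y : V} (hx : G.Adj v x) (hy : G.Adj v y) (hxy : x ≠ y) (T : Set V)
    (hxT : x ∈ T) (hvT : v ∉ T) (hT : ∀ t ∈ T, G.Adj v t → t = x ∨ t = y)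
    (hr : (chordalRestr G T).Reachable x y) : G.Adj x y := by
  by_contra hnadj
  obtain ⟨p, hp, hlen⟩ := hr.exists_path_of_dist
  have hmem := chordalRestr_walk_mem G T p hxT
  have hl0 : p.length ≠ 0 := fun h => hxy (SimpleGraph.Walk.eq_of_length_eq_zero h)
  have hl1 : p.length ≠ 1 := fun h =>
    hnadj (SimpleGraph.Walk.adj_of_length_eq_one h).1
  set q : G.Walk x y := p.mapLe (chordalRestr_le G T) with hq
  have hqp : q.IsPath := hp.mapLe _
  have hqs : q.support = p.support := SimpleGraph.Walk.support_mapLe_eq_support ..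
  have hqe : q.edges = p.edges := SimpleGraph.Walk.edges_mapLe_eq_edges ..
  have hql : q.length = p.length := SimpleGraph.Walk.length_mapLe ..
  have hvq : v ∉ q.support := by
    rw [hqs]; exact fun h => hvT (hmem v h)
  have hc : (SimpleGraph.Walk.cons hx (q.concat hy.symm)).IsCycle := by
    rw [SimpleGraph.Walk.cons_isCycle_iff]
    refine ⟨(SimpleGraph.Walk.concat_isPath_iff _).2 ⟨hqp, hvq⟩, ?_⟩
    rw [SimpleGraph.Walk.edges_concat, List.concat_eq_append, List.mem_append]
    rintro (h | h)
    · exact hvq (SimpleGraph.Walk.fst_mem_support_of_mem_edges _ h)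
    · simp only [List.mem_singleton, Sym2.eq_iff] at h
      rcases h with ⟨rfl, _⟩ | ⟨_, h⟩
      · exact hy.ne rfl
      · exact hxy h
  obtain ⟨s, t, hs, ht, hst, hne⟩ := hG _ hc (by simp [SimpleGraph.Walk.length_concat]; omega)
  have key : ∀ z, (z ∈ (SimpleGraph.Walk.cons hx (q.concat hy.symm)).support) →
      z = v ∨ z ∈ p.support := by
    intro z hz
    simp only [SimpleGraph.Walk.support_cons, SimpleGraph.Walk.support_concat, hqs,
      List.concat_eq_append, List.mem_cons, List.mem_append, List.not_mem_nil] at hz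
    tauto
  have hedge : ∀ e, (e = s(v, x) ∨ e ∈ p.edges ∨ e = s(y, v)) →
      e ∈ (SimpleGraph.Walk.cons hx (q.concat hy.symm)).edges := by
    intro e he
    simp only [SimpleGraph.Walk.edges_cons, SimpleGraph.Walk.edges_concat, hqe,
      List.concat_eq_append, List.mem_cons, List.mem_append, List.not_mem_nil]
    tauto
  apply hne
  apply hedge
  rcases key s hs with rfl | hs'
  · rcases key t ht with rfl | ht'
    · exact absurd rfl hst.ne
    · rcases hT t (hmem t ht') hst with rfl | rfl
      · exact Or.inl rfl
      · exact Or.inr (Or.inr Sym2.eq_swap)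
  · rcases key t ht with rfl | ht'
    · rcases hT s (hmem s hs') hst.symm with rfl | rfl
      · exact Or.inl Sym2.eq_swap
      · exact Or.inr (Or.inr rfl)
    · refine Or.inr (Or.inl ?_)
      have hH : (chordalRestr G T).Adj s t := ⟨hst, hmem s hs', hmem t ht'⟩
      obtain ⟨i, hi, hil⟩ := SimpleGraph.Walk.mem_support_iff_exists_getVert.1 hs'
      obtain ⟨j, hj, hjl⟩ := SimpleGraph.Walk.mem_support_iff_exists_getVert.1 ht'
      rw [SimpleGraph.Walk.mk_mem_edges_iff_exists]
      rcases lt_trichotomy i j with h | h | h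
      · have := chordless_of_shortest p hlen h hjl (by rw [hi, hj]; exact hH)
        subst this
        exact ⟨i, by omega, by rw [hi, hj]⟩
      · subst h
        exact absurd (hi.symm.trans hj) hst.ne
      · have := chordless_of_shortest p hlen h hil (by rw [hi, hj]; exact hH.symm)
        subst this
        exact ⟨j, by omega, by rw [hi, hj, Sym2.eq_swap]⟩

/-- Dirac: a non-universal vertex has a simplicial non-neighbour. -/
theorem exists_simplicial_nonadj {V : Type*} {G : SimpleGraph V} (hG : G.IsChordal) :
    ∀ (n : ℕ) (S : Finset V), S.card = n → ∀ v ∈ S, ∀ u ∈ S, u ≠ v → ¬ G.Adj v u →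
      ∃ w ∈ S, w ≠ v ∧ ¬ G.Adj v w ∧ G.IsClique {u | u ∈ S ∧ G.Adj w u} := by
  classical
  intro n
  induction n using Nat.strong_induction_on with
  | _ n ih =>
  intro S hSn v hv c hc hcv hvc
  let T : Set V := {t | t ∈ S ∧ t ≠ v ∧ ¬ G.Adj v t}
  have hcT : c ∈ T := ⟨hc, hcv, hvc⟩
  let C : Set V := {t | (chordalRestr G T).Reachable c t}
  have hCT : ∀ t ∈ C, t ∈ T := by
    rintro t ⟨p⟩
    exact chordalRestr_walk_mem G T p hcT t p.end_mem_support
  have hcC : c ∈ C := SimpleGraph.Reachable.refl _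
  let B : Set V := {b | b ∈ S ∧ b ∉ C ∧ ∃ a ∈ C, G.Adj a b}
  have hBv : ∀ b ∈ B, G.Adj v b := by
    rintro b ⟨hbS, hbC, a, haC, hab⟩
    by_contra hvb
    have hbv : b ≠ v := by
      rintro rfl
      exact (hCT a haC).2.2 hab.symm
    have hbT : b ∈ T := ⟨hbS, hbv, hvb⟩
    exact hbC (SimpleGraph.Reachable.trans haC
      (SimpleGraph.Adj.reachable (G := chordalRestr G T) ⟨hab, hCT a haC, hbT⟩))
  have hBclique : ∀ x ∈ B, ∀ y ∈ B, x ≠ y → G.Adj x y := by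
    intro x hx y hy hxy
    obtain ⟨-, -, a, ha, hax⟩ := id hx
    obtain ⟨-, -, b, hb, hby⟩ := id hy
    have hTT : T ⊆ T ∪ {x, y} := Set.subset_union_left
    have hxT : x ∈ T ∪ {x, y} := by simp
    have hyT : y ∈ T ∪ {x, y} := by simp
    refine adj_of_reachable_avoiding hG (hBv x hx) (hBv y hy) hxy (T ∪ {x, y}) hxT ?_ ?_ ?_
    · rintro (h | h | h)
      · exact h.2.1 rfl
      · exact (hBv x hx).ne h
      · exact (hBv y hy).ne h
    · rintro t (h | h | h) hvt
      · exact absurd hvt h.2.2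
      · exact Or.inl h
      · exact Or.inr h
    · have h1 : (chordalRestr G (T ∪ {x, y})).Adj x a := ⟨hax.symm, hxT, hTT (hCT a ha)⟩
      have h2 : (chordalRestr G (T ∪ {x, y})).Adj b y := ⟨hby, hTT (hCT b hb), hyT⟩
      have h3 : (chordalRestr G T).Reachable a b := (SimpleGraph.Reachable.symm ha).trans hb
      exact h1.reachable.trans ((h3.mono (chordalRestr_mono G hTT)).trans h2.reachable)
  let S' : Finset V := S.filter (fun t => t ∈ C ∨ t ∈ B)
  have hS' : ∀ t, t ∈ S' ↔ t ∈ C ∨ t ∈ B := by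
    intro t
    simp only [S', Finset.mem_filter]
    constructor
    · exact fun h => h.2
    · rintro (h | h)
      · exact ⟨(hCT t h).1, Or.inl h⟩
      · exact ⟨h.1, Or.inr h⟩
  have hcard : S'.card < n := by
    rw [← hSn]
    apply Finset.card_lt_card
    refine ⟨Finset.filter_subset _ _, fun h => ?_⟩
    rcases (hS' v).1 (h hv) with h | h
    · exact (hCT v h).2.1 rfl
    · exact (hBv v h).ne rfl
  -- it suffices to find a vertex of `C` simplicial in `S'`
  suffices hsuff : ∃ w ∈ C, G.IsClique {u | u ∈ S' ∧ G.Adj w u} by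
    obtain ⟨w, hwC, hw⟩ := hsuff
    refine ⟨w, (hCT w hwC).1, (hCT w hwC).2.1, (hCT w hwC).2.2, hw.subset ?_⟩
    rintro u ⟨huS, hwu⟩
    refine ⟨(hS' u).2 ?_, hwu⟩
    by_cases huC : u ∈ C
    · exact Or.inl huC
    · exact Or.inr ⟨huS, huC, w, hwC, hwu⟩
  by_cases h1 : ∃ b ∈ B, ∃ u ∈ S', u ≠ b ∧ ¬ G.Adj b u
  · obtain ⟨b, hb, u, hu, hub, hbu⟩ := h1
    obtain ⟨w, hw, hwb, hbw, hcl⟩ := ih _ hcard S' rfl b ((hS' b).2 (Or.inr hb)) u hu hub hbu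
    refine ⟨w, ?_, hcl⟩
    rcases (hS' w).1 hw with h | h
    · exact h
    · exact absurd (hBclique b hb w h hwb.symm) hbw
  · push Not at h1
    by_cases h2 : ∃ b ∈ S', ∃ u ∈ S', u ≠ b ∧ ¬ G.Adj b u
    · obtain ⟨b, hb, u, hu, hub, hbu⟩ := h2
      obtain ⟨w, hw, hwb, hbw, hcl⟩ := ih _ hcard S' rfl b hb u hu hub hbu
      refine ⟨w, ?_, hcl⟩
      rcases (hS' w).1 hw with h | h
      · exact h
      · exact absurd (h1 w h b hb hwb.symm).symm hbw
    · push Not at h2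
      exact ⟨c, hcC, fun a ha b hb hab => h2 a ha.1 b hb.1 hab.symm⟩

theorem exists_simplicial_of_chordal {V : Type*} {G : SimpleGraph V} (hG : G.IsChordal)
    (S : Finset V) (hS : S.Nonempty) : ∃ w ∈ S, G.IsClique {u | u ∈ S ∧ G.Adj w u} := by
  by_cases h : ∃ b ∈ S, ∃ u ∈ S, u ≠ b ∧ ¬ G.Adj b u
  · obtain ⟨b, hb, u, hu, hub, hbu⟩ := h
    obtain ⟨w, hw, -, -, hcl⟩ := exists_simplicial_nonadj hG _ S rfl b hb u hu hub hbu
    exact ⟨w, hw, hcl⟩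
  · push Not at h
    obtain ⟨c, hc⟩ := hS
    exact ⟨c, hc, fun a ha b hb hab => h a ha.1 b hb.1 hab.symm⟩

theorem exists_rank_of_chordal {V : Type*} {G : SimpleGraph V} (hG : G.IsChordal) :
    ∀ (n : ℕ) (S : Finset V), S.card = n → ∃ f : V → ℕ, Set.InjOn f S ∧
      ∀ v ∈ S, G.IsClique {u | u ∈ S ∧ G.Adj v u ∧ f v < f u} := by
  classical
  intro n
  induction n with
  | zero =>
    intro S hS
    rw [Finset.card_eq_zero] at hS
    subst hS
    exact ⟨fun _ => 0, by simp, by simp⟩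
  | succ n ih =>
    intro S hS
    obtain ⟨w, hw, hcl⟩ := exists_simplicial_of_chordal hG S (Finset.card_pos.1 (by omega))
    obtain ⟨f, hf, hcf⟩ := ih (S.erase w) (by rw [Finset.card_erase_of_mem hw]; omega)
    refine ⟨fun x => if x = w then 0 else f x + 1, ?_, ?_⟩
    · intro a ha b hb hab
      by_cases haw : a = w <;> by_cases hbw : b = w <;> simp [haw, hbw] at hab ⊢
      exact hf (by simpa [haw] using ha) (by simpa [hbw] using hb) hab
    · intro v hv
      by_cases hvw : v = w
      · subst hvw
        refine hcl.subset ?_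
        rintro u ⟨hu, hvu, -⟩
        exact ⟨hu, hvu⟩
      · refine (hcf v (Finset.mem_erase.2 ⟨hvw, hv⟩)).subset ?_
        rintro u ⟨hu, hvu, hlt⟩
        by_cases huw : u = w
        · simp [huw] at hlt
        · simp only [hvw, huw, if_false] at hlt
          exact ⟨Finset.mem_erase.2 ⟨huw, hu⟩, hvu, by omega⟩

theorem exists_peo_of_chordal {V : Type*} [Fintype V] {G : SimpleGraph V} (hG : G.IsChordal) :
    ∃ e : V ≃ Fin (Fintype.card V), G.IsPerfectElimOrdering e := by
  obtain ⟨f, hf, hcf⟩ := exists_rank_of_chordal hG _ Finset.univ rfl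
  have hinj : Function.Injective f := fun a b h => hf (by simp) (by simp) h
  letI : LinearOrder V := LinearOrder.lift' f hinj
  let o := (Fintype.orderIsoFinOfCardEq V rfl).symm
  refine ⟨o.toEquiv, fun v => (hcf v (Finset.mem_univ _)).subset ?_⟩
  rintro u ⟨hvu, hlt⟩
  refine ⟨Finset.mem_univ _, hvu, ?_⟩
  have : v < u := o.lt_iff_lt.1 hlt
  exact this

theorem chordal_of_peo {V : Type*} [Fintype V] {G : SimpleGraph V}
    (e : V ≃ Fin (Fintype.card V)) (he : G.IsPerfectElimOrdering e) : G.IsChordal := by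
  classical
  intro v₀ c₀ hc₀ hl₀
  obtain ⟨v, hv, hmin⟩ := Finset.exists_min_image c₀.support.toFinset e
    ⟨v₀, by simp⟩
  rw [List.mem_toFinset] at hv
  have hsup : ∀ z, z ∈ (c₀.rotate v hv).support ↔ z ∈ c₀.support := fun z =>
    SimpleGraph.Walk.mem_support_rotate_iff ..
  have hed : ∀ z, z ∈ (c₀.rotate v hv).edges ↔ z ∈ c₀.edges := fun z =>
    (SimpleGraph.Walk.rotate_edges c₀ v hv).mem_iff
  have hc : (c₀.rotate v hv).IsCycle := hc₀.rotate hv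
  have hl : 4 ≤ (c₀.rotate v hv).length := by simpa using hl₀
  simp only [← hed, ← hsup]
  simp only [List.mem_toFinset, ← hsup] at hmin
  generalize c₀.rotate v hv = c at *
  have h1 : G.Adj v c.snd := c.adj_snd hc.not_nil
  have h2 : G.Adj v c.penultimate := (c.adj_penultimate hc.not_nil).symm
  have hs1 : c.snd ∈ c.support := c.getVert_mem_support _
  have hs2 : c.penultimate ∈ c.support := c.getVert_mem_support _
  have hlt : ∀ z ∈ c.support, G.Adj v z → e v < e z := fun z hz hvz =>
    lt_of_le_of_ne (hmin z hz) (fun h => hvz.ne (e.injective h))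
  refine ⟨c.snd, c.penultimate, hs1, hs2,
    he v ⟨h1, hlt _ hs1 h1⟩ ⟨h2, hlt _ hs2 h2⟩ hc.snd_ne_penultimate, ?_⟩
  rw [SimpleGraph.Walk.mk_mem_edges_iff_exists]
  rintro ⟨i, hi, h⟩
  have inj := hc.getVert_injOn
  have inj' := hc.getVert_injOn'
  rw [Sym2.eq_iff] at h
  rcases h with ⟨ha, hb⟩ | ⟨ha, hb⟩
  · have e1 : i = 1 := inj' (by simp; omega) (by simp; omega) ha
    have e2 : i + 1 = c.length - 1 := inj (by simp; omega) (by simp; omega) hb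
    omega
  · have e1 : i = c.length - 1 := inj' (by simp; omega) (by simp) ha
    have e2 : i + 1 = 1 := inj (by simp; omega) (by simp; omega) hb
    omega

/-- A finite simple graph is chordal if and only if there exists a perfect elimination
ordering of its vertex set. -/
theorem isChordal_iff_exists_perfectElimOrdering {V : Type*} [Fintype V]
    (G : SimpleGraph V) :
    G.IsChordal ↔ ∃ e : V ≃ Fin (Fintype.card V), G.IsPerfectElimOrdering e := by
  exact ⟨exists_peo_of_chordal, fun ⟨e, he⟩ => chordal_of_peo e he⟩
end

section
/- If G is a finite connected chordal graph, then the geometric realization of the 2-skeleton of the flag complex of G is simply connected. (More generally, every connected component of the geometric realization of the 2-skeleton of the flag complex of a finite chordal graph is simply connected.) -/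
/-- The 2-skeleton of the flag complex of a graph `G`: the faces are the cliques of `G`
of cardinality at most 3 (including singletons and the empty set). -/
def flagComplexTwoSkeleton {V : Type*} (G : SimpleGraph V) : Set (Finset V) :=
  { σ : Finset V | G.IsClique (σ : Set V) ∧ σ.card ≤ 3 }

/-- The geometric realization of an abstract simplicial complex on a vertex set `V`,
given as a set of faces: the union, inside the real vector space `V → ℝ` with basis the
standard basis vectors, of the convex hulls of the faces. -/
def geomRealization {V : Type*} [DecidableEq V] (F : Set (Finset V)) : Set (V → ℝ) :=
  ⋃ σ ∈ F, convexHull ℝ ((fun x => (Pi.single x 1 : V → ℝ)) '' (σ : Set V))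

namespace ChordalAux
open CategoryTheory

section Holonomy
variable {V : Type*} {G : SimpleGraph V} {C : Type*} [Groupoid C] {f : V → C}
  (e : ∀ {u v : V}, G.Adj u v → (f u ⟶ f v))

/-- holonomy of a walk -/
def hol : ∀ {u v : V}, G.Walk u v → (f u ⟶ f v)
  | _, _, .nil => 𝟙 _
  | _, _, .cons h p => e h ≫ hol p

theorem hol_append {u v w : V} (p : G.Walk u v) (q : G.Walk v w) :
    hol e (p.append q) = hol e p ≫ hol e q := by
  induction p with
  | nil => simp [hol]
  | cons h p ih => simp [hol, ih]

theorem hol_bypass [DecidableEq V] (N : ℕ)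
    (H : ∀ (v : V) (c : G.Walk v v), c.length < N → hol e c = 𝟙 _) {u v : V}
    (p : G.Walk u v) (hp : p.length < N) : hol e p.bypass = hol e p := by
  induction p with
  | nil => rfl
  | @cons u w v h p ih =>
    simp only [SimpleGraph.Walk.length_cons] at hp
    have ih' := ih (by omega)
    simp only [SimpleGraph.Walk.bypass]
    split_ifs with hs
    · have h1 := H u (.cons h (p.bypass.takeUntil u hs)) (by
        have := p.bypass.length_takeUntil_le_length hs
        have := p.length_bypass_le_length
        simp only [SimpleGraph.Walk.length_cons]; omega)
      have h2 : hol e p.bypass = hol e (p.bypass.takeUntil u hs) ≫ hol e (p.bypass.dropUntil u hs) := by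
        rw [← hol_append, SimpleGraph.Walk.take_spec]
      simp only [hol] at h1 ⊢
      rw [← ih', h2, ← Category.assoc, h1, Category.id_comp]
    · simp only [hol, ih']

theorem hol_closed [DecidableEq V] (hc : G.IsChordal)
    (hinv : ∀ {u v : V} (h : G.Adj u v), e h ≫ e h.symm = 𝟙 _)
    (htri : ∀ {u v w : V} (h : G.Adj u v) (h' : G.Adj v w) (h'' : G.Adj u w),
      e h ≫ e h' = e h'') :
    ∀ (n : ℕ) (v : V) (c : G.Walk v v), c.length = n → hol e c = 𝟙 _ := by
  intro n
  induction n using Nat.strong_induction_on with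
  | _ n IH =>
  intro v c hn
  have IH' : ∀ (v : V) (c : G.Walk v v), c.length < n → hol e c = 𝟙 _ :=
    fun v c h => IH _ h v c rfl
  cases c with
  | nil => rfl
  | @cons _ w _ h p =>
  simp only [SimpleGraph.Walk.length_cons] at hn
  have hb := hol_bypass e n IH' p (by omega)
  have hl := p.length_bypass_le_length
  have hpath := p.bypass_isPath
  simp only [hol]
  rw [← hb]
  generalize p.bypass = q at hb hl hpath
  by_cases hmem : s(v, w) ∈ q.edges
  · cases q with
    | nil => simp at hmem
    | @cons _ x _ h' q =>
      rw [SimpleGraph.Walk.cons_isPath_iff] at hpath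
      simp only [SimpleGraph.Walk.edges_cons, List.mem_cons] at hmem
      rcases hmem with hmem | hmem
      · have hx : x = v := by
          simp only [Sym2.eq, Sym2.rel_iff', Prod.mk.injEq, Prod.swap_prod_mk] at hmem
          rcases hmem with ⟨h1, h2⟩ | ⟨h1, h2⟩
          · exact absurd h1 h.ne
          · exact h1.symm
        subst hx
        have := (SimpleGraph.Walk.isPath_iff_nil.1 hpath.1).eq_nil
        subst this
        simp only [hol, Category.comp_id]
        exact hinv h
      · exact absurd (q.snd_mem_support_of_mem_edges hmem) hpath.2
  · have hcyc : (SimpleGraph.Walk.cons h q).IsCycle :=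
      (SimpleGraph.Walk.cons_isCycle_iff q h).2 ⟨hpath, hmem⟩
    have h3 := hcyc.three_le_length
    by_cases h4 : 4 ≤ (SimpleGraph.Walk.cons h q).length
    · obtain ⟨x, y, hx, hy, hxy, hxye⟩ := hc _ hcyc h4
      have hcn : (SimpleGraph.Walk.cons h q).length ≤ n := by
        simp only [SimpleGraph.Walk.length_cons]; omega
      change hol e (SimpleGraph.Walk.cons h q) = 𝟙 _
      generalize SimpleGraph.Walk.cons h q = c at *
      have key : hol e (c.rotate x hx) = 𝟙 _ := by
        have hy' : y ∈ (c.rotate x hx).support := by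
          rw [SimpleGraph.Walk.mem_support_rotate_iff]
          exact hy
        have hxye' : s(x, y) ∉ (c.rotate x hx).edges := by
          rwa [(c.rotate_edges x hx).mem_iff]
        have hcn' : (c.rotate x hx).length ≤ n := by simpa using hcn
        generalize c.rotate x hx = d at *
        have hspec := d.take_spec hy'
        generalize d.takeUntil y hy' = a at hspec
        generalize d.dropUntil y hy' = b at hspec
        subst hspec
        simp only [SimpleGraph.Walk.length_append, SimpleGraph.Walk.edges_append,
          List.mem_append, not_or] at hcn' hxye'
        have ha : 2 ≤ a.length := by
          cases a with
          | nil => exact absurd rfl hxy.ne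
          | cons h1 a => cases a with
            | nil => simp at hxye'
            | cons h2 a => simp
        have hb : 2 ≤ b.length := by
          cases b with
          | nil => exact absurd rfl hxy.ne
          | cons h1 a => cases a with
            | nil => simp [Sym2.eq_swap] at hxye'
            | cons h2 a => simp
        have e1 := IH' x (.cons hxy b) (by simp; omega)
        have e2 := IH' y (.cons hxy.symm a) (by simp; omega)
        simp only [hol] at e1 e2
        rw [hol_append]
        have e3 := hinv hxy
        calc hol e a ≫ hol e b = (e hxy ≫ e hxy.symm) ≫ hol e a ≫ hol e b := by
              rw [e3, Category.id_comp]
          _ = e hxy ≫ (e hxy.symm ≫ hol e a) ≫ hol e b := by simp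
          _ = 𝟙 _ := by rw [e2, Category.id_comp, e1]
      have hs := c.take_spec hx
      rw [SimpleGraph.Walk.rotate, hol_append] at key
      rw [← hs, hol_append]
      generalize hol e (c.takeUntil x hx) = A at key ⊢
      generalize hol e (c.dropUntil x hx) = B at key ⊢
      have hA : A = Groupoid.inv B := by
        calc A = Groupoid.inv B ≫ B ≫ A := by simp
          _ = Groupoid.inv B := by rw [key, Category.comp_id]
      rw [hA]; simp
    · cases q with
      | nil => simp at h3
      | cons h1 q => cases q with
        | nil => simp at h3
        | cons h2 q => cases q with
          | nil =>
            simp only [hol, Category.comp_id]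
            rw [htri h1 h2 h.symm, hinv]
          | cons h5 q => simp at h4

theorem hol_eq [DecidableEq V] (hc : G.IsChordal)
    (hinv : ∀ {u v : V} (h : G.Adj u v), e h ≫ e h.symm = 𝟙 _)
    (htri : ∀ {u v w : V} (h : G.Adj u v) (h' : G.Adj v w) (h'' : G.Adj u w),
      e h ≫ e h' = e h'') {u v : V} (p q : G.Walk u v) : hol e p = hol e q := by
  have h1 := hol_closed e hc hinv htri _ _ (p.append q.reverse) rfl
  have h2 := hol_closed e hc hinv htri _ _ (q.reverse.append q) rfl
  rw [hol_append] at h1 h2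
  calc hol e p = hol e p ≫ hol e q.reverse ≫ hol e q := by rw [h2, Category.comp_id]
    _ = hol e q := by rw [← Category.assoc, h1, Category.id_comp]

end Holonomy

set_option linter.unusedSectionVars false

section Geometry
variable {E : Type*} [AddCommGroup E] [Module ℝ E] [TopologicalSpace E]
  [ContinuousAdd E] [ContinuousSMul ℝ E]

theorem homotopic_of_starConvex {X S : Set E} (hS : S ⊆ X) {c : E} (hst : StarConvex ℝ c S)
    {x y : X} (p q : Path x y) (hp : ∀ t, (p t : E) ∈ S) (hq : ∀ t, (q t : E) ∈ S) :
    p.Homotopic q := by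
  have hx : (x : E) ∈ S := by simpa using hp 0
  have hy : (y : E) ∈ S := by simpa using hp 1
  have : ContractibleSpace S := hst.contractibleSpace ⟨_, hx⟩
  let p' : Path (⟨x, hx⟩ : S) ⟨y, hy⟩ :=
    { toFun := fun t => ⟨p t, hp t⟩
      continuous_toFun := by fun_prop
      source' := by simp
      target' := by simp }
  let q' : Path (⟨x, hx⟩ : S) ⟨y, hy⟩ :=
    { toFun := fun t => ⟨q t, hq t⟩
      continuous_toFun := by fun_prop
      source' := by simp
      target' := by simp }
  obtain ⟨F⟩ := SimplyConnectedSpace.paths_homotopic p' q'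
  exact ⟨F.map ⟨Set.inclusion hS, continuous_inclusion hS⟩⟩

/-- the segment path inside `X` -/
noncomputable def segPath {X : Set E} (a b : X) (h : segment ℝ (a : E) b ⊆ X) : Path a b where
  toFun t := ⟨Path.segment (a : E) b t, h (by rw [← Path.range_segment]; exact ⟨t, rfl⟩)⟩
  continuous_toFun := by fun_prop
  source' := by simp
  target' := by simp

theorem segPath_mem {X : Set E} (a b : X) (h : segment ℝ (a : E) b ⊆ X) (t : unitInterval) :
    (segPath a b h t : E) ∈ segment ℝ (a : E) b := by
  rw [← Path.range_segment]; exact ⟨t, rfl⟩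

theorem trans_mem {X : Set E} {S : Set E} {a b c : X} (p : Path a b) (q : Path b c)
    (hp : ∀ t, (p t : E) ∈ S) (hq : ∀ t, (q t : E) ∈ S) (t : unitInterval) :
    (p.trans q t : E) ∈ S := by
  rw [Path.trans_apply]
  split_ifs
  · exact hp _
  · exact hq _

/-- class of segment path as a morphism in the fundamental groupoid -/
noncomputable def seg {X : Set E} (a b : X) (h : segment ℝ (a : E) b ⊆ X) :
    (⟨a⟩ : FundamentalGroupoid X) ⟶ ⟨b⟩ :=
  Path.Homotopic.Quotient.mk (segPath a b h)

/-- class of a path as a morphism in the fundamental groupoid -/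
def cls {Y : Type*} [TopologicalSpace Y] {a b : Y} (p : Path a b) :
    (⟨a⟩ : FundamentalGroupoid Y) ⟶ ⟨b⟩ :=
  Path.Homotopic.Quotient.mk p

theorem cls_trans {Y : Type*} [TopologicalSpace Y] {a b c : Y} (p : Path a b) (q : Path b c) :
    cls (p.trans q) = cls p ≫ cls q := rfl

theorem cls_refl {Y : Type*} [TopologicalSpace Y] (a : Y) :
    cls (Path.refl a) = 𝟙 (⟨a⟩ : FundamentalGroupoid Y) := rfl

theorem cls_eq {Y : Type*} [TopologicalSpace Y] {a b : Y} {p q : Path a b} (h : p.Homotopic q) :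
    cls p = cls q := Path.Homotopic.Quotient.eq.2 h

theorem seg_comp {X S : Set E} (hS : S ⊆ X) (hc : Convex ℝ S) (a b c : X)
    (ha : (a : E) ∈ S) (hb : (b : E) ∈ S) (hc' : (c : E) ∈ S) (hab hbc hac) :
    seg a b hab ≫ seg b c hbc = seg a c hac := by
  change cls ((segPath a b hab).trans (segPath b c hbc)) = cls (segPath a c hac)
  apply cls_eq
  apply homotopic_of_starConvex hS (hc.starConvex ha)
  · apply trans_mem
    · exact fun t => hc.segment_subset ha hb (segPath_mem ..)
    · exact fun t => hc.segment_subset hb hc' (segPath_mem ..)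
  · exact fun t => hc.segment_subset ha hc' (segPath_mem ..)

theorem seg_self {X : Set E} (a : X) (h) : seg a a h = 𝟙 _ := by
  change cls (segPath a a h) = cls (Path.refl a)
  congr 1
  ext t
  simp [segPath]

/-- In a space covered by star-shaped pieces, a path in a piece is determined by the spokes. -/
theorem cls_star {X S : Set E} (hS : S ⊆ X) (c : X) (hst : StarConvex ℝ (c : E) S)
    {x y : X} (p : Path x y) (hp : ∀ t, (p t : E) ∈ S) (hx hy) :
    seg c x hx ≫ cls p = seg c y hy := by
  change cls ((segPath c x hx).trans p) = cls (segPath c y hy)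
  have hxS : (x : E) ∈ S := by simpa using hp 0
  have hyS : (y : E) ∈ S := by simpa using hp 1
  apply cls_eq
  apply homotopic_of_starConvex hS hst
  · apply trans_mem
    · exact fun t => hst.segment_subset hxS (segPath_mem ..)
    · exact hp
  · exact fun t => hst.segment_subset hyS (segPath_mem ..)

end Geometry

section Complex
variable {V : Type*} [Fintype V] [DecidableEq V] {G : SimpleGraph V}

/-- hull of a face -/
abbrev face (σ : Finset V) : Set (V → ℝ) :=
  convexHull ℝ ((fun x => (Pi.single x 1 : V → ℝ)) '' (σ : Set V))

/-- the space -/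
abbrev sp (G : SimpleGraph V) : Set (V → ℝ) := geomRealization (flagComplexTwoSkeleton G)

theorem mem_sp {x : V → ℝ} : x ∈ sp G ↔ ∃ σ ∈ flagComplexTwoSkeleton G, x ∈ face σ := by
  simp [sp, geomRealization]

theorem face_subset {σ : Finset V} (h : σ ∈ flagComplexTwoSkeleton G) : face σ ⊆ sp G :=
  fun _ hx => mem_sp.2 ⟨σ, h, hx⟩

theorem vert_mem_face {σ : Finset V} {v : V} (h : v ∈ σ) : (Pi.single v 1 : V → ℝ) ∈ face σ :=
  subset_convexHull _ _ ⟨v, h, rfl⟩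

theorem mem_of_pos {σ : Finset V} {v : V} {x : V → ℝ} (hx : x ∈ face σ) (hv : 0 < x v) :
    v ∈ σ := by
  by_contra hn
  have : face σ ⊆ {x | x v = 0} := by
    apply convexHull_min
    · rintro _ ⟨w, hw, rfl⟩
      have : v ≠ w := by rintro rfl; exact hn hw
      simp [this]
    · intro a ha b hb s t _ _ _
      simp only [Set.mem_ofPred_eq] at ha hb
      simp [ha, hb]
  exact hv.ne' (this hx)

theorem exists_pos {σ : Finset V} {x : V → ℝ} (hx : x ∈ face σ) : ∃ v, 0 < x v := by
  by_contra! hn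
  have : face σ ⊆ {x | ∑ i, x i = 1} := by
    apply convexHull_min
    · rintro _ ⟨w, hw, rfl⟩
      simp
    · intro a ha b hb s t _ _ hst
      simp only [Set.mem_ofPred_eq] at ha hb
      simp [Finset.sum_add_distrib, ← Finset.mul_sum, ha, hb, hst]
  have h1 : ∑ i, x i = 1 := this hx
  have h2 : ∑ i, x i ≤ 0 := Finset.sum_nonpos (fun i _ => hn i)
  linarith

/-- vertex -/
def vert (G : SimpleGraph V) (v : V) : sp G :=
  ⟨Pi.single v 1, face_subset (σ := {v}) (by simp [flagComplexTwoSkeleton])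
    (vert_mem_face (by simp))⟩

theorem edge_mem {u v : V} (h : G.Adj u v) : ({u, v} : Finset V) ∈ flagComplexTwoSkeleton G := by
  refine ⟨?_, Finset.card_le_two.trans (by norm_num)⟩
  simp [SimpleGraph.isClique_iff, Set.Pairwise, h, h.symm]

theorem tri_mem {u v w : V} (h : G.Adj u v) (h' : G.Adj v w) (h'' : G.Adj u w) :
    ({u, v, w} : Finset V) ∈ flagComplexTwoSkeleton G := by
  refine ⟨?_, Finset.card_le_three⟩
  simp [SimpleGraph.isClique_iff, Set.Pairwise, h, h.symm, h', h'.symm, h'', h''.symm]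

/-- open star -/
def ostar (G : SimpleGraph V) (v : V) : Set (V → ℝ) := {x ∈ sp G | 0 < x v}

theorem ostar_starConvex (v : V) : StarConvex ℝ (vert G v : V → ℝ) (ostar G v) := by
  rintro x ⟨hx, hv⟩ a b ha hb hab
  obtain ⟨σ, hσ, hxσ⟩ := mem_sp.1 hx
  refine ⟨face_subset hσ (convex_convexHull ℝ _
    (vert_mem_face (mem_of_pos hxσ hv)) hxσ ha hb hab), ?_⟩
  simp only [vert, Pi.add_apply, Pi.smul_apply, Pi.single_eq_same, smul_eq_mul, mul_one]
  rcases ha.eq_or_lt with rfl | ha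
  · simp only [zero_add] at hab; subst hab; simpa using hv
  · positivity

theorem spoke_sub {v : V} {x : sp G} (hv : 0 < x.1 v) :
    segment ℝ (vert G v : V → ℝ) x ⊆ sp G := fun _ h =>
  ((ostar_starConvex v).segment_subset (⟨x.2, hv⟩ : x.1 ∈ ostar G v) h).1

theorem edge_sub {u v : V} (h : G.Adj u v) :
    segment ℝ (vert G u : V → ℝ) (vert G v) ⊆ sp G :=
  ((convex_convexHull ℝ _).segment_subset (vert_mem_face (by simp)) (vert_mem_face (by simp))).trans
    (face_subset (edge_mem h))

/-- edge morphism -/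
noncomputable def edge {u v : V} (h : G.Adj u v) :
    (⟨vert G u⟩ : FundamentalGroupoid (sp G)) ⟶ ⟨vert G v⟩ := seg _ _ (edge_sub h)

/-- spoke morphism -/
noncomputable def spoke {v : V} {x : sp G} (hv : 0 < x.1 v) :
    (⟨vert G v⟩ : FundamentalGroupoid (sp G)) ⟶ ⟨x⟩ := seg _ _ (spoke_sub hv)

theorem edge_inv {u v : V} (h : G.Adj u v) : edge h ≫ edge h.symm = 𝟙 _ := by
  have hs : segment ℝ (vert G u : V → ℝ) (vert G u) ⊆ sp G := by
    rw [segment_same]; simp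
  rw [← seg_self (vert G u) hs]
  exact seg_comp (face_subset (edge_mem h)) (convex_convexHull ℝ _) _ _ _
    (vert_mem_face (by simp)) (vert_mem_face (by simp)) (vert_mem_face (by simp)) _ _ _

theorem edge_tri {u v w : V} (h : G.Adj u v) (h' : G.Adj v w) (h'' : G.Adj u w) :
    edge h ≫ edge h' = edge h'' :=
  seg_comp (face_subset (tri_mem h h' h'')) (convex_convexHull ℝ _) _ _ _
    (vert_mem_face (by simp)) (vert_mem_face (by simp)) (vert_mem_face (by simp)) _ _ _

theorem spoke_change {x : sp G} {v w : V} (hv : 0 < x.1 v) (hw : 0 < x.1 w) :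
    ∃ a : G.Walk v w, spoke hv = hol edge a ≫ spoke hw := by
  by_cases hvw : v = w
  · subst hvw
    exact ⟨.nil, by simp [hol]⟩
  obtain ⟨σ, hσ, hxσ⟩ := mem_sp.1 x.2
  have hvσ := mem_of_pos hxσ hv
  have hwσ := mem_of_pos hxσ hw
  have hadj : G.Adj v w := hσ.1 hvσ hwσ hvw
  refine ⟨.cons hadj .nil, ?_⟩
  simp only [hol, Category.comp_id]
  exact (seg_comp (face_subset hσ) (convex_convexHull ℝ _) _ _ _
    (vert_mem_face hvσ) (vert_mem_face hwσ) hxσ _ _ _).symm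

theorem small_path {x y : sp G} {v w : V} (hv : 0 < x.1 v) (hw : 0 < y.1 w) (i : V)
    (p : Path x y) (hp : ∀ t, 0 < (p t).1 i) :
    ∃ a : G.Walk v w, spoke hv ≫ cls p = hol edge a ≫ spoke hw := by
  have hxi : 0 < x.1 i := by simpa using hp 0
  have hyi : 0 < y.1 i := by simpa using hp 1
  obtain ⟨a, ha⟩ := spoke_change hv hxi
  obtain ⟨b, hb⟩ := spoke_change hyi hw
  refine ⟨a.append b, ?_⟩
  have h : spoke hxi ≫ cls p = spoke hyi :=
    cls_star (S := ostar G i) (fun _ h => h.1) (vert G i) (ostar_starConvex i) p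
      (fun t => ⟨(p t).2, hp t⟩) _ _
  rw [ha, hol_append, Category.assoc, Category.assoc, h, hb]

theorem exists_pos' (x : sp G) : ∃ v, 0 < x.1 v := by
  obtain ⟨σ, hσ, hxσ⟩ := mem_sp.1 x.2
  exact exists_pos hxσ

theorem isOpen_star (v : V) : IsOpen {x : sp G | 0 < x.1 v} :=
  isOpen_lt continuous_const ((continuous_apply v).comp continuous_subtype_val)

theorem of_cast {x y x' y' : sp G} {v w : V} {hv : 0 < x.1 v} {hw : 0 < y.1 w}
    (hx : x' = x) (hy : y' = y) (p : Path x y) {hv' : 0 < x'.1 v} {hw' : 0 < y'.1 w}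
    (h : ∃ a : G.Walk v w, spoke hv' ≫ cls (p.cast hx hy) = hol edge a ≫ spoke hw') :
    ∃ a : G.Walk v w, spoke hv ≫ cls p = hol edge a ≫ spoke hw := by
  subst hx hy
  exact h

theorem any_path {x y : sp G} {v w : V} (hv : 0 < x.1 v) (hw : 0 < y.1 w) (p : Path x y) :
    ∃ a : G.Walk v w, spoke hv ≫ cls p = hol edge a ≫ spoke hw := by
  obtain ⟨t, t0, tm, ⟨n, hn⟩, ht⟩ := exists_monotone_Icc_subset_open_cover_unitInterval
    (c := fun i : V => {s : unitInterval | 0 < (p s).1 i})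
    (fun i => (isOpen_star i).preimage p.continuous)
    (fun s _ => by simpa using exists_pos' (p s))
  have key : ∀ n : ℕ, ∀ (v w : V) (hv : 0 < (p 0).1 v) (hw : 0 < (p (t n)).1 w),
      ∃ a : G.Walk v w, spoke hv ≫ cls (p.subpath 0 (t n)) = hol edge a ≫ spoke hw := by
    intro n
    induction n with
    | zero =>
      intro v w hv hw
      refine small_path hv hw v _ (fun s => ?_)
      rw [t0, Path.subpath_self]
      exact hv
    | succ n ih =>
      intro v w hv hw
      obtain ⟨i, hi⟩ := ht n
      have hle := tm (Nat.le_succ n)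
      have hin : 0 < (p (t n)).1 i := hi ⟨le_rfl, hle⟩
      obtain ⟨a, ha⟩ := ih v i hv hin
      obtain ⟨b, hb⟩ := small_path hin hw i (p.subpath (t n) (t (n+1))) (by
        intro s
        have : p.subpath (t n) (t (n+1)) s ∈ Set.range (p.subpath (t n) (t (n+1))) := ⟨s, rfl⟩
        rw [Path.range_subpath_of_le _ _ _ hle] at this
        obtain ⟨r, hr, hr'⟩ := this
        rw [← hr']
        exact hi hr)
      refine ⟨a.append b, ?_⟩
      rw [← cls_eq ⟨Path.Homotopy.subpathTransSubpath p 0 (t n) (t (n+1))⟩, cls_trans,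
        ← Category.assoc, ha, Category.assoc, hb, hol_append, Category.assoc]
  have ht1 := hn n le_rfl
  have hv' : 0 < (p 0).1 v := by simpa using hv
  have hw' : 0 < (p (t n)).1 w := by rw [ht1]; simpa using hw
  have h := key n v w hv' hw'
  have gen : ∀ (r : unitInterval) (_ : r = 1) (hw' : 0 < (p r).1 w),
      (∃ a : G.Walk v w, spoke hv' ≫ cls (p.subpath 0 r) = hol edge a ≫ spoke hw') →
      ∃ a : G.Walk v w, spoke hv ≫ cls p = hol edge a ≫ spoke hw := by
    rintro r rfl hw' h
    rw [Path.subpath_zero_one] at h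
    exact of_cast p.source p.target p h
  exact gen _ ht1 hw' h

theorem paths_homotopic (hc : G.IsChordal) {x y : sp G} (p q : Path x y) : p.Homotopic q := by
  obtain ⟨v, hv⟩ := exists_pos' x
  obtain ⟨w, hw⟩ := exists_pos' y
  obtain ⟨a, ha⟩ := any_path hv hw p
  obtain ⟨b, hb⟩ := any_path hv hw q
  rw [hol_eq edge hc edge_inv edge_tri a b, ← hb] at ha
  have : cls p = cls q := (cancel_epi _).1 ha
  exact Path.Homotopic.Quotient.exact this

theorem joined_vert {x : sp G} {v : V} (hv : 0 < x.1 v) : Joined (vert G v) x :=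
  ⟨segPath _ _ (spoke_sub hv)⟩

theorem component_eq (x : sp G) : connectedComponent x = pathComponent x := by
  apply Set.Subset.antisymm _ (pathComponent_subset_component x)
  have hop : ∀ z : sp G, IsOpen (pathComponent z) := by
    intro z
    rw [isOpen_iff_mem_nhds]
    intro y hy
    obtain ⟨v, hv⟩ := exists_pos' y
    refine Filter.mem_of_superset ((isOpen_star v).mem_nhds hv) ?_
    intro u hu
    exact Joined.trans hy ((joined_vert hv).symm.trans (joined_vert hu))
  have hcl : IsClopen (pathComponent x) := by
    refine ⟨⟨?_⟩, hop x⟩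
    rw [isOpen_iff_mem_nhds]
    intro y hy
    refine Filter.mem_of_superset ((hop y).mem_nhds (mem_pathComponent_self y)) ?_
    intro z hz hz'
    exact hy (Joined.trans hz' (Joined.symm hz))
  exact hcl.connectedComponent_subset (mem_pathComponent_self x)

theorem component_sc (hc : G.IsChordal) (x : sp G) :
    SimplyConnectedSpace (connectedComponent x) := by
  rw [component_eq]
  apply IsSimplyConnected.simplyConnectedSpace
  rw [isSimplyConnected_iff_exists_homotopy_refl_forall_mem]
  refine ⟨isPathConnected_pathComponent, fun y p hp => ?_⟩
  obtain ⟨F⟩ := paths_homotopic hc p (Path.refl y)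
  refine ⟨F, fun t => ?_⟩
  have hy : y ∈ pathComponent x := by simpa using hp 0
  have h1 : Joined (0 : unitInterval) t.2 :=
    (isPathConnected_iff_pathConnectedSpace.1
      ((convex_Icc (0 : ℝ) 1).isPathConnected ⟨0, by simp⟩)).joined _ _
  have h2 : Joined (F (t.1, 0)) (F (t.1, t.2)) :=
    h1.map (f := fun r => F (t.1, r)) (by fun_prop)
  simp only [Path.Homotopy.source] at h2
  exact Joined.trans hy h2

theorem walk_joined {u v : V} (p : G.Walk u v) : Joined (vert G u) (vert G v) := by
  induction p with
  | nil => exact Joined.refl _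
  | cons h p ih => exact Joined.trans ⟨segPath _ _ (edge_sub h)⟩ ih

theorem sp_sc (hc : G.IsChordal) (hG : G.Connected) : SimplyConnectedSpace (sp G) := by
  rw [simply_connected_iff_paths_homotopic']
  obtain ⟨v0⟩ := hG.nonempty
  refine ⟨⟨⟨vert G v0⟩, fun x y => ?_⟩, fun p q => paths_homotopic hc p q⟩
  obtain ⟨v, hv⟩ := exists_pos' x
  obtain ⟨w, hw⟩ := exists_pos' y
  obtain ⟨a⟩ := hG.preconnected v w
  exact (joined_vert hv).symm.trans ((walk_joined a).trans (joined_vert hw))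

end Complex
end ChordalAux

/-- If `G` is a finite chordal graph, then every connected component of the geometric
realization of the 2-skeleton of the flag complex of `G` is simply connected; in
particular, if `G` is moreover connected then this geometric realization itself is
simply connected. -/
theorem flagComplexTwoSkeleton_simplyConnected {V : Type*} [Fintype V] [DecidableEq V]
    (G : SimpleGraph V) (hc : G.IsChordal) :
    (∀ x : geomRealization (flagComplexTwoSkeleton G),
      SimplyConnectedSpace (connectedComponent x)) ∧
    (G.Connected → SimplyConnectedSpace (geomRealization (flagComplexTwoSkeleton G))) := by
  exact ⟨fun x => ChordalAux.component_sc hc x, fun h => ChordalAux.sp_sc hc h⟩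
end

section
/- Let K be the simplicial complex on the vertex set {1,2,3,4} whose faces are exactly the subsets of {1,2,3} and the subsets of {3,4}. Then its moment-angle complex Z_K = (D² × D² × D² × S¹) ∪ (S¹ × S¹ × D² × D²), a subspace of (D²)⁴, is homotopy equivalent to the join (S¹ × S¹) * S¹ of the 2-torus with the circle. -/
/-- The setoid on `X × [0,1] × Y` defining the topological join `X * Y`: the
identifications are `(x,0,y) ∼ (x,0,y′)` and `(x,1,y) ∼ (x′,1,y)`. -/
def joinSetoid (X Y : Type*) : Setoid (X × unitInterval × Y) where
  r a b := a = b ∨ (a.2.1 = 0 ∧ b.2.1 = 0 ∧ a.1 = b.1) ∨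
    (a.2.1 = 1 ∧ b.2.1 = 1 ∧ a.2.2 = b.2.2)
  iseqv := by
    have h01 : (0 : unitInterval) ≠ 1 := by
      intro h
      have := congrArg Subtype.val h
      norm_num at this
    refine ⟨fun a => Or.inl rfl, ?_, ?_⟩
    · rintro a b (rfl | ⟨h1, h2, h3⟩ | ⟨h1, h2, h3⟩)
      · exact Or.inl rfl
      · exact Or.inr (Or.inl ⟨h2, h1, h3.symm⟩)
      · exact Or.inr (Or.inr ⟨h2, h1, h3.symm⟩)
    · rintro a b c (rfl | ⟨h1, h2, h3⟩ | ⟨h1, h2, h3⟩) (rfl | ⟨h4, h5, h6⟩ | ⟨h4, h5, h6⟩)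
      · exact Or.inl rfl
      · exact Or.inr (Or.inl ⟨h4, h5, h6⟩)
      · exact Or.inr (Or.inr ⟨h4, h5, h6⟩)
      · exact Or.inr (Or.inl ⟨h1, h2, h3⟩)
      · exact Or.inr (Or.inl ⟨h1, h5, h3.trans h6⟩)
      · exact absurd (h2.symm.trans h4) h01
      · exact Or.inr (Or.inr ⟨h1, h2, h3⟩)
      · exact absurd (h2.symm.trans h4) (fun h => h01 h.symm)
      · exact Or.inr (Or.inr ⟨h1, h5, h3.trans h6⟩)

/-- The topological join `X * Y`: the quotient of `X × [0,1] × Y` by the identifications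
`(x,0,y) ∼ (x,0,y′)` and `(x,1,y) ∼ (x′,1,y)`. -/
def TopJoin (X Y : Type*) [TopologicalSpace X] [TopologicalSpace Y] : Type _ :=
  Quotient (joinSetoid X Y)

instance (X Y : Type*) [TopologicalSpace X] [TopologicalSpace Y] :
    TopologicalSpace (TopJoin X Y) :=
  instTopologicalSpaceQuotient

/-- The moment-angle complex of a simplicial complex `K` on `[m]`, a subspace of
`(D²)^m ⊆ ℂ^m`: the union over the faces `σ ∈ K` of the products `Y₁ × ⋯ × Y_m` with
`Y_i = D²` for `i ∈ σ` and `Y_i = S¹` for `i ∉ σ`. -/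
def momentAngleComplex {m : ℕ} (K : Set (Finset (Fin m))) : Set (Fin m → ℂ) :=
  ⋃ σ ∈ K, { z : Fin m → ℂ | ∀ i : Fin m,
    if i ∈ σ then z i ∈ Metric.closedBall (0 : ℂ) 1 else z i ∈ Metric.sphere (0 : ℂ) 1 }

/-- The simplicial complex on `{1,2,3,4}` whose faces are exactly the subsets of
`{1,2,3}` and the subsets of `{3,4}` (written with `Fin 4 = {0,1,2,3}`). -/
def Kex : Set (Finset (Fin 4)) :=
  { σ : Finset (Fin 4) | σ ⊆ {0, 1, 2} ∨ σ ⊆ {2, 3} }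

theorem mem_Zex (z : Fin 4 → ℂ) : z ∈ momentAngleComplex Kex ↔
    (∀ i, ‖z i‖ ≤ 1) ∧ (‖z 3‖ = 1 ∨ (‖z 0‖ = 1 ∧ ‖z 1‖ = 1)) := by
  constructor
  · intro h
    simp only [momentAngleComplex, Set.mem_iUnion, Set.mem_ofPred_eq] at h
    obtain ⟨σ, hσ, h⟩ := h
    constructor
    · intro i
      have := h i
      split_ifs at this
      · simpa using this
      · exact le_of_eq (by simpa using this)
    · rcases hσ with hσ | hσ
      · left
        have h3 : (3 : Fin 4) ∉ σ := fun h => by have := hσ h; revert this; decide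
        have := h 3
        rw [if_neg h3] at this
        simpa using this
      · right
        have h0 : (0 : Fin 4) ∉ σ := fun h => by have := hσ h; revert this; decide
        have h1 : (1 : Fin 4) ∉ σ := fun h => by have := hσ h; revert this; decide
        have H0 := h 0
        have H1 := h 1
        rw [if_neg h0] at H0
        rw [if_neg h1] at H1
        exact ⟨by simpa using H0, by simpa using H1⟩
  · rintro ⟨h, h3 | ⟨h0, h1⟩⟩
    · simp only [momentAngleComplex, Set.mem_iUnion, Set.mem_ofPred_eq]
      refine ⟨{0, 1, 2}, Or.inl subset_rfl, fun i => ?_⟩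
      fin_cases i <;> simp [h, h3]
    · simp only [momentAngleComplex, Set.mem_iUnion, Set.mem_ofPred_eq]
      refine ⟨{2, 3}, Or.inr subset_rfl, fun i => ?_⟩
      fin_cases i <;> simp [h, h0, h1]

/-- A concrete model of the join inside `ℂ³`. -/
def joinModel : Set (ℂ × ℂ × ℂ) :=
  {p | ‖p.1‖ ≤ 1 ∧ ‖p.2.2‖ ≤ 1 ∧ ‖p.1‖ = ‖p.2.1‖ ∧ (‖p.2.2‖ = 1 ∨ ‖p.1‖ = 1)}

theorem exists_unit_smul (p : ℂ) : ∃ a : Metric.sphere (0 : ℂ) 1, ((‖p‖ : ℝ) : ℂ) * a = p := by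
  by_cases h : p = 0
  · exact ⟨⟨1, by simp⟩, by simp [h]⟩
  · have hn : ‖p‖ ≠ 0 := norm_ne_zero_iff.mpr h
    refine ⟨⟨p / (‖p‖ : ℝ), by simp [hn]⟩, ?_⟩
    have : ((‖p‖ : ℝ) : ℂ) ≠ 0 := by exact_mod_cast hn
    field_simp

theorem norm_sph (a : Metric.sphere (0 : ℂ) 1) : ‖(a : ℂ)‖ = 1 := by simp

/-- Coordinates of the join in the model, before passing to the quotient. -/
noncomputable def joinPre
    (p : (Metric.sphere (0 : ℂ) 1 × Metric.sphere (0 : ℂ) 1) × unitInterval ×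
      Metric.sphere (0 : ℂ) 1) : ℂ × ℂ × ℂ :=
  (((min 1 (2 * (1 - (p.2.1 : ℝ))) : ℝ) : ℂ) * p.1.1,
   ((min 1 (2 * (1 - (p.2.1 : ℝ))) : ℝ) : ℂ) * p.1.2,
   ((min 1 (2 * (p.2.1 : ℝ)) : ℝ) : ℂ) * p.2.2)

theorem norm_smul_sph (t : ℝ) (ht : 0 ≤ t) (a : Metric.sphere (0 : ℂ) 1) :
    ‖(t : ℂ) * a‖ = t := by
  rw [norm_mul, norm_sph, mul_one, Complex.norm_real, Real.norm_of_nonneg ht]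

theorem joinPre_norms (p) : ‖(joinPre p).1‖ = min 1 (2 * (1 - (p.2.1 : ℝ))) ∧
    ‖(joinPre p).2.1‖ = min 1 (2 * (1 - (p.2.1 : ℝ))) ∧
    ‖(joinPre p).2.2‖ = min 1 (2 * (p.2.1 : ℝ)) := by
  have h0 := p.2.1.2.1
  have h1 := p.2.1.2.2
  exact ⟨norm_smul_sph _ (le_min (by norm_num) (by linarith)) _,
    norm_smul_sph _ (le_min (by norm_num) (by linarith)) _,
    norm_smul_sph _ (le_min (by norm_num) (by linarith)) _⟩

theorem joinPre_mem (p) : joinPre p ∈ joinModel := by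
  obtain ⟨h1, h2, h3⟩ := joinPre_norms p
  refine ⟨by rw [h1]; exact min_le_left _ _, by rw [h3]; exact min_le_left _ _,
    by rw [h1, h2], ?_⟩
  rw [h1, h3]
  rcases le_total (p.2.1 : ℝ) (1 / 2) with h | h
  · right; exact min_eq_left (by linarith)
  · left; exact min_eq_left (by linarith)

theorem joinPre_continuous : Continuous joinPre := by
  unfold joinPre
  fun_prop

theorem joinPre_eq_iff (p q) : joinPre p = joinPre q ↔ (joinSetoid _ _).r p q := by
  constructor
  · intro h
    obtain ⟨h1, h2, h3⟩ := joinPre_norms p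
    obtain ⟨g1, g2, g3⟩ := joinPre_norms q
    rw [h] at h1 h2 h3
    have e1 := g1.symm.trans h1
    have e3 := g3.symm.trans h3
    have ht : (p.2.1 : ℝ) = q.2.1 := by
      rcases min_cases 1 (2 * (1 - (p.2.1 : ℝ))) with h | h <;>
      rcases min_cases 1 (2 * (1 - (q.2.1 : ℝ))) with h' | h' <;>
      rcases min_cases 1 (2 * ((p.2.1 : ℝ))) with h'' | h'' <;>
      rcases min_cases 1 (2 * ((q.2.1 : ℝ))) with h''' | h''' <;> linarith
    obtain ⟨⟨a, b⟩, t, c⟩ := p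
    obtain ⟨⟨a', b'⟩, t', c'⟩ := q
    obtain rfl : t = t' := Subtype.ext ht
    have t0 := t.2.1
    have t1 := t.2.2
    simp only [joinPre, Prod.mk.injEq] at h
    obtain ⟨k1, k2, k3⟩ := h
    have A : (t : ℝ) ≠ 1 → a = a' ∧ b = b' := by
      intro hne
      have hlt : (t : ℝ) < 1 := lt_of_le_of_ne t1 hne
      have hp : (0 : ℝ) < min 1 (2 * (1 - (t : ℝ))) := lt_min (by norm_num) (by linarith)
      have hc : ((min 1 (2 * (1 - (t : ℝ))) : ℝ) : ℂ) ≠ 0 := by exact_mod_cast hp.ne'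
      exact ⟨Subtype.ext (mul_left_cancel₀ hc k1), Subtype.ext (mul_left_cancel₀ hc k2)⟩
    have B : (t : ℝ) ≠ 0 → c = c' := by
      intro hne
      have hlt : 0 < (t : ℝ) := lt_of_le_of_ne t0 hne.symm
      have hp : (0 : ℝ) < min 1 (2 * (t : ℝ)) := lt_min (by norm_num) (by linarith)
      have hc : ((min 1 (2 * (t : ℝ)) : ℝ) : ℂ) ≠ 0 := by exact_mod_cast hp.ne'
      exact Subtype.ext (mul_left_cancel₀ hc k3)
    by_cases c0 : (t : ℝ) = 0
    · obtain ⟨rfl, rfl⟩ := A (by rw [c0]; norm_num)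
      exact Or.inr (Or.inl ⟨Subtype.ext c0, Subtype.ext c0, rfl⟩)
    · obtain rfl := B c0
      by_cases c1 : (t : ℝ) = 1
      · exact Or.inr (Or.inr ⟨Subtype.ext c1, Subtype.ext c1, rfl⟩)
      · obtain ⟨rfl, rfl⟩ := A c1
        exact Or.inl rfl
  · rintro (rfl | ⟨h1, h2, h3⟩ | ⟨h1, h2, h3⟩)
    · rfl
    · simp [joinPre, h1, h2, h3]
    · simp [joinPre, h1, h2, h3]

theorem joinPre_surj (x : ℂ × ℂ × ℂ) (hx : x ∈ joinModel) : ∃ p, joinPre p = x := by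
  obtain ⟨p, q, r⟩ := x
  obtain ⟨h1, h2, h3, h4⟩ := hx
  simp only at h1 h2 h3 h4
  obtain ⟨a, ha⟩ := exists_unit_smul p
  obtain ⟨b, hb⟩ := exists_unit_smul q
  obtain ⟨c, hc⟩ := exists_unit_smul r
  have np := norm_nonneg p
  have nr := norm_nonneg r
  refine ⟨((a, b), ⟨(1 - ‖p‖ + ‖r‖) / 2, by linarith, by linarith⟩, c), ?_⟩
  have E1 : min 1 (2 * (1 - (1 - ‖p‖ + ‖r‖) / 2)) = ‖p‖ := by
    rcases h4 with h | h <;> rw [h]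
    · rw [min_eq_right] <;> linarith
    · rw [min_eq_left]; linarith
  have E2 : min 1 (2 * ((1 - ‖p‖ + ‖r‖) / 2)) = ‖r‖ := by
    rcases h4 with h | h <;> rw [h]
    · rw [min_eq_left]; linarith
    · rw [min_eq_right] <;> linarith
  simp only [joinPre, E1, E2, ha, hc, Prod.mk.injEq, true_and, and_true]
  rw [h3, hb]

/-- The map from the join to the model. -/
noncomputable def joinToModel :
    TopJoin (Metric.sphere (0 : ℂ) 1 × Metric.sphere (0 : ℂ) 1) (Metric.sphere (0 : ℂ) 1) →
      joinModel :=
  Quotient.lift (fun p => (⟨joinPre p, joinPre_mem p⟩ : joinModel))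
    (fun p q h => Subtype.ext ((joinPre_eq_iff p q).2 h))

theorem joinToModel_continuous : Continuous joinToModel :=
  Continuous.quotient_lift (joinPre_continuous.subtype_mk _) _

theorem joinToModel_bijective : Function.Bijective joinToModel := by
  constructor
  · intro x y
    refine Quotient.inductionOn₂ x y (fun p q h => ?_)
    exact Quotient.sound ((joinPre_eq_iff p q).1 (congrArg Subtype.val h))
  · rintro ⟨x, hx⟩
    obtain ⟨p, hp⟩ := joinPre_surj x hx
    exact ⟨Quotient.mk _ p, Subtype.ext hp⟩

instance : CompactSpace
    (TopJoin (Metric.sphere (0 : ℂ) 1 × Metric.sphere (0 : ℂ) 1) (Metric.sphere (0 : ℂ) 1)) :=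
  inferInstanceAs (CompactSpace (Quotient (joinSetoid _ _)))

/-- The join is homeomorphic to the model. -/
noncomputable def joinHomeo :
    TopJoin (Metric.sphere (0 : ℂ) 1 × Metric.sphere (0 : ℂ) 1) (Metric.sphere (0 : ℂ) 1) ≃ₜ
      joinModel :=
  Continuous.homeoOfEquivCompactToT2 (f := Equiv.ofBijective joinToModel joinToModel_bijective)
    joinToModel_continuous

/-- The interpolation factor. -/
noncomputable def fac (u s : ℝ) : ℂ := ((u + (1 - u) * s : ℝ) : ℂ)

theorem norm_fac {u s : ℝ} (hu : 0 ≤ u) (hu1 : u ≤ 1) (hs : 0 ≤ s) :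
    ‖fac u s‖ = u + (1 - u) * s := by
  rw [fac, Complex.norm_real, Real.norm_of_nonneg]
  have := mul_nonneg (sub_nonneg.2 hu1) hs
  linarith

theorem fac_le {u s : ℝ} (hu : 0 ≤ u) (hu1 : u ≤ 1) (hs : 0 ≤ s) (hs1 : s ≤ 1) (x : ℂ)
    (hx : ‖x‖ ≤ 1) : ‖fac u s * x‖ ≤ 1 := by
  rw [norm_mul, norm_fac hu hu1 hs]
  have := mul_nonneg (sub_nonneg.2 hu1) hs
  refine mul_le_one₀ ?_ (norm_nonneg _) hx
  nlinarith

theorem fac_one (u : ℝ) : fac u 1 = 1 := by simp [fac]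

theorem Zhom_mem (u : unitInterval) (z : momentAngleComplex Kex) :
    (![fac u ‖z.1 1‖ * z.1 0, fac u ‖z.1 0‖ * z.1 1, ((u : ℝ) : ℂ) * z.1 2, z.1 3] : Fin 4 → ℂ) ∈
      momentAngleComplex Kex := by
  obtain ⟨z, hz⟩ := z
  have hu := u.2.1
  have hu1 := u.2.2
  rw [mem_Zex] at hz ⊢
  obtain ⟨h, h'⟩ := hz
  constructor
  · intro i
    fin_cases i
    · exact fac_le hu hu1 (norm_nonneg _) (h 1) _ (h 0)
    · exact fac_le hu hu1 (norm_nonneg _) (h 0) _ (h 1)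
    · change ‖((u : ℝ) : ℂ) * z 2‖ ≤ 1
      rw [norm_mul, Complex.norm_real, Real.norm_of_nonneg hu]
      exact mul_le_one₀ hu1 (norm_nonneg _) (h 2)
    · exact h 3
  · rcases h' with h' | ⟨h0, h1⟩
    · exact Or.inl h'
    · right
      simp [h0, h1, fac_one]

theorem Jhom_mem (u : unitInterval) (x : joinModel) :
    (fac u ‖x.1.2.1‖ * x.1.1, fac u ‖x.1.1‖ * x.1.2.1, x.1.2.2) ∈ joinModel := by
  obtain ⟨⟨p, q, r⟩, h1, h2, h3, h4⟩ := x
  have hu := u.2.1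
  have hu1 := u.2.2
  simp only at h1 h2 h3 h4
  refine ⟨fac_le hu hu1 (norm_nonneg _) (h3 ▸ h1) _ h1, h2, ?_, ?_⟩
  · simp only [norm_mul, h3]
  · rcases h4 with h | h
    · exact Or.inl h
    · right
      simp only [← h3, h, fac_one, one_mul]

theorem ZtoJ_mem (z : momentAngleComplex Kex) :
    (fac 0 ‖z.1 1‖ * z.1 0, fac 0 ‖z.1 0‖ * z.1 1, z.1 3) ∈ joinModel := by
  obtain ⟨z, hz⟩ := z
  rw [mem_Zex] at hz
  obtain ⟨h, h'⟩ := hz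
  refine ⟨fac_le le_rfl zero_le_one (norm_nonneg _) (h 1) _ (h 0), h 3, ?_, ?_⟩
  · simp [fac, mul_comm]
  · rcases h' with h' | ⟨h0, h1⟩
    · exact Or.inl h'
    · right
      simp [h0, h1, fac_one]

theorem JtoZ_mem (x : joinModel) :
    (![x.1.1, x.1.2.1, 0, x.1.2.2] : Fin 4 → ℂ) ∈ momentAngleComplex Kex := by
  obtain ⟨⟨p, q, r⟩, h1, h2, h3, h4⟩ := x
  simp only at h1 h2 h3 h4
  rw [mem_Zex]
  constructor
  · intro i
    fin_cases i
    · exact h1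
    · exact h3 ▸ h1
    · simp
    · exact h2
  · rcases h4 with h | h
    · exact Or.inl h
    · exact Or.inr ⟨h, h3 ▸ h⟩

/-- The moment-angle complex is homotopy equivalent to the model of the join. -/
noncomputable def ZequivModel : ContinuousMap.HomotopyEquiv (momentAngleComplex Kex) joinModel where
  toFun := ⟨fun z => ⟨_, ZtoJ_mem z⟩, by
    have h : ∀ i, Continuous fun a : momentAngleComplex Kex => a.1 i :=
      fun i => (continuous_apply i).comp (continuous_subtype_val)
    have h0 := h 0
    have h1 := h 1
    have h2 := h 2
    have h3 := h 3
    refine Continuous.subtype_mk ?_ _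
    unfold fac
    exact ((Complex.continuous_ofReal.comp
      (continuous_const.add (continuous_const.mul h1.norm))).mul h0).prodMk
      (((Complex.continuous_ofReal.comp
      (continuous_const.add (continuous_const.mul h0.norm))).mul h1).prodMk h3)⟩
  invFun := ⟨fun x => ⟨_, JtoZ_mem x⟩, by
    refine Continuous.subtype_mk ?_ _
    refine continuous_pi fun i => ?_
    fin_cases i <;> simp <;> fun_prop⟩
  left_inv := ⟨{
    toFun := fun p => ⟨_, Zhom_mem p.1 p.2⟩
    continuous_toFun := by
      have h : ∀ i, Continuous fun a : unitInterval × momentAngleComplex Kex => a.2.1 i :=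
        fun i => (continuous_apply i).comp (continuous_subtype_val.comp continuous_snd)
      have h0 := h 0
      have h1 := h 1
      have h2 := h 2
      have h3 := h 3
      refine Continuous.subtype_mk ?_ _
      refine continuous_pi fun i => ?_
      unfold fac
      fin_cases i <;> simp <;> fun_prop
    map_zero_left := fun z => Subtype.ext (by
      funext i
      fin_cases i <;> simp)
    map_one_left := fun z => Subtype.ext (by
      funext i
      fin_cases i <;> simp [fac]) }⟩
  right_inv := ⟨{
    toFun := fun p => ⟨_, Jhom_mem p.1 p.2⟩
    continuous_toFun := by
      refine Continuous.subtype_mk ?_ _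
      unfold fac
      fun_prop
    map_zero_left := fun x => Subtype.ext (by simp)
    map_one_left := fun x => Subtype.ext (by simp [fac]) }⟩

/-- The moment-angle complex of the complex with facets `{1,2,3}` and `{3,4}`, i.e.
`Z_K = (D² × D² × D² × S¹) ∪ (S¹ × S¹ × D² × D²)`, is homotopy equivalent to the join
`(S¹ × S¹) * S¹` of the 2-torus with the circle. -/
theorem momentAngleComplex_homotopyEquiv_join :
    Nonempty (ContinuousMap.HomotopyEquiv (momentAngleComplex Kex)
      (TopJoin (Metric.sphere (0 : ℂ) 1 × Metric.sphere (0 : ℂ) 1)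
        (Metric.sphere (0 : ℂ) 1))) := by
  exact ⟨ZequivModel.trans joinHomeo.symm.toHomotopyEquiv⟩
end
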